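/- arXiv:1601.05525 — 4 statements merged into one kernel-verified Lean document; each statement's English description precedes it below -/
import Mathlib

section
/- Let A and B be n×n complex positive semidefinite matrices. Then for every j = 1, …, n, the j-th largest eigenvalue of A + B satisfies λ_j(A + B) ≥ 2·√(σ_j(AB)), where σ_j(AB) denotes the j-th largest singular value of AB. -/
/-!
The proof exhibits, by an explicit linear map, a large subspace on which `A + B` is bounded below.
Put `S = B^{1/2}`, `L = (S A S)^{1/2}` and, for a vector `x`, `y = S x` and
`w = A B x + S L S x`. If `‖A B x‖ ≥ t² ‖x‖`, then, since `⟪A B x, S L y⟫ = ⟪L³ y, y⟫` and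
`t⁴ ‖x‖² + ‖S L y‖² ≥ 2 t² ⟪x, S L y⟫ = 2 t² ⟪L y, y⟫`,
`‖w‖² ≥ 2 t² ⟪L y, y⟫ + 2 ⟪L³ y, y⟫ ≥ 4 t ⟪L² y, y⟫`,
the last step being `L (L - t)² ≥ 0`. On the other hand `w = A p + S v` with `p = B x`, `v = L y`
and `⟪A p, p⟫ = ‖v‖² = ‖L y‖²`, so that expanding
`⟪A (w - 2 t p), w - 2 t p⟫ + ‖S w - 2 t v‖² ≥ 0` gives `⟪(A + B) w, w⟫ ≥ 2 t ‖w‖²`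
(`two_mul_norm_sq_le`); moreover `w = 0` forces `x = 0` when `t > 0` (`eq_zero_of_image_eq_zero`).

Take `t = √σ_j(AB)`. The vectors `x` with `‖A B x‖ ≥ t² ‖x‖` contain the span of the eigenvectors
of `(AB)ᴴ(AB)` with eigenvalue at least `t⁴`, whose dimension is at least `j`. Fewer than `j`
eigenvalues of `A + B` exceed `λ_j(A + B)`, so by a dimension count some `x ≠ 0` in that span has
`w` orthogonal to the corresponding eigenvectors; for this `w ≠ 0`,
`2 t ‖w‖² ≤ ⟪(A + B) w, w⟫ ≤ λ_j(A + B) ‖w‖²`.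
-/

open Matrix
open scoped Classical ComplexOrder

/-- `eigDesc A j` is the `j`-th largest eigenvalue (1-based) of the Hermitian matrix `A`. -/
noncomputable def eigDesc {m : Type*} [Fintype m] [DecidableEq m] (A : Matrix m m ℂ) (j : ℕ) : ℝ :=
  if h : A.IsHermitian then
    ((Finset.univ.val.map h.eigenvalues).sort (· ≤ ·)).getD (Fintype.card m - j) 0
  else 0

/-- `singDesc M j` is the `j`-th largest singular value (1-based) of `M`, i.e. the square root
of the `j`-th largest eigenvalue of `Mᴴ * M`. -/
noncomputable def singDesc {m : Type*} [Fintype m] [DecidableEq m] (M : Matrix m m ℂ) (j : ℕ) : ℝ :=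
  Real.sqrt (eigDesc (Mᴴ * M) j)

/-- `matPow A s` is the power `A ^ s` of a positive semidefinite matrix `A`, defined via the
spectral decomposition of `A` (junk value `0` if `A` is not positive semidefinite). -/
noncomputable def matPow {m : Type*} [Fintype m] [DecidableEq m] (A : Matrix m m ℂ) (s : ℝ) :
    Matrix m m ℂ :=
  if h : A.PosSemidef then
    (h.1.eigenvectorUnitary : Matrix m m ℂ) *
      Matrix.diagonal (fun i => ((h.1.eigenvalues i ^ s : ℝ) : ℂ)) *
      (h.1.eigenvectorUnitary : Matrix m m ℂ)ᴴ
  else 0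

section Core

variable {E : Type*} [NormedAddCommGroup E] [InnerProductSpace ℂ E]

/-- With `B = S²` and `L² = S A S`, the vector `w = A B x + S L S x` has norm bounded below in
terms of `‖L S x‖`. -/
lemma four_mul_norm_sq_le (A S L : E →ₗ[ℂ] E) (hS : S.IsSymmetric) (hL : L.IsPositive)
    (hLL : ∀ x, L (L x) = S (A (S x))) (x : E) (t : ℝ)
    (hx : t ^ 2 * ‖x‖ ≤ ‖A (S (S x))‖) :
    4 * t * ‖L (S x)‖ ^ 2 ≤ ‖A (S (S x)) + S (L (S x))‖ ^ 2 := by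
  set y := S x with hy
  have e1 : ‖A (S y) + S (L y)‖ ^ 2
      = ‖A (S y)‖ ^ 2 + 2 * RCLike.re (inner ℂ (L (L y)) (L y)) + ‖S (L y)‖ ^ 2 := by
    rw [@norm_add_sq ℂ, ← hS, hLL]
  have e2 : 0 ≤ RCLike.re (inner ℂ (L (L y - (t : ℂ) • y)) (L y - (t : ℂ) • y)) :=
    hL.re_inner_nonneg_left _
  have e3 : RCLike.re (inner ℂ (L (L y - (t : ℂ) • y)) (L y - (t : ℂ) • y))
      = RCLike.re (inner ℂ (L (L y)) (L y)) - 2 * t * ‖L y‖ ^ 2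
        + t ^ 2 * RCLike.re (inner ℂ (L y) y) := by
    have : inner ℂ (L (L y)) y = inner ℂ (L y) (L y) := hL.isSymmetric _ _
    simp only [map_sub, map_smul, inner_sub_left, inner_sub_right, inner_smul_left,
      inner_smul_right, this, inner_self_eq_norm_sq_to_K]
    simp [← Complex.ofReal_pow]
    ring
  have e4 : 0 ≤ ‖((t ^ 2 : ℝ) : ℂ) • x - S (L y)‖ ^ 2 := by positivity
  have e5 : ‖((t ^ 2 : ℝ) : ℂ) • x - S (L y)‖ ^ 2
      = (t ^ 2 * ‖x‖) ^ 2 - 2 * (t ^ 2 * RCLike.re (inner ℂ (L y) y)) + ‖S (L y)‖ ^ 2 := by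
    have : inner ℂ x (S (L y)) = inner ℂ (L y) y := by
      rw [← hS, ← hy, hL.isSymmetric]
    rw [@norm_sub_sq ℂ, inner_smul_left, this, norm_smul]
    simp [-Complex.ofReal_pow]
  have e6 : (t ^ 2 * ‖x‖) ^ 2 ≤ ‖A (S y)‖ ^ 2 := by gcongr
  linarith

/-- The quadratic form of `A + S²` is at least `2 t` on the vector `w = A S² x + S L S x`. -/
lemma two_mul_norm_sq_le (A S L : E →ₗ[ℂ] E) (hA : A.IsPositive) (hS : S.IsSymmetric)
    (hL : L.IsPositive) (hLL : ∀ x, L (L x) = S (A (S x))) (x : E) (t : ℝ) (ht : 0 ≤ t)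
    (hx : t ^ 2 * ‖x‖ ≤ ‖A (S (S x))‖) :
    2 * t * ‖A (S (S x)) + S (L (S x))‖ ^ 2 ≤
      RCLike.re (inner ℂ (A (A (S (S x)) + S (L (S x))) + S (S (A (S (S x)) + S (L (S x)))))
        (A (S (S x)) + S (L (S x)))) := by
  have h4 := four_mul_norm_sq_le A S L hS hL hLL x t hx
  set y := S x with hy
  obtain ⟨w, hw⟩ : ∃ w, w = A (S y) + S (L y) := ⟨_, rfl⟩
  rw [← hw] at h4 ⊢
  -- Positivity of `A` at `w - 2 t p` with `p = S y`, and of `‖S w - 2 t v‖²` with `v = L y`.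
  have a1 : 0 ≤ RCLike.re (inner ℂ (A (w - ((2 * t : ℝ) : ℂ) • S y))
      (w - ((2 * t : ℝ) : ℂ) • S y)) := hA.re_inner_nonneg_left _
  have a2 : RCLike.re (inner ℂ (A (w - ((2 * t : ℝ) : ℂ) • S y)) (w - ((2 * t : ℝ) : ℂ) • S y))
      = RCLike.re (inner ℂ (A w) w) - 2 * (2 * t) * RCLike.re (inner ℂ (A (S y)) w)
        + (2 * t) ^ 2 * ‖L y‖ ^ 2 := by
    have h1 : RCLike.re (inner ℂ (A w) (S y)) = RCLike.re (inner ℂ (A (S y)) w) := by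
      rw [hA.isSymmetric, inner_re_symm]
    have h2 : inner ℂ (A (S y)) (S y) = inner ℂ (L y) (L y) := by
      rw [← hS, ← hLL, hL.isSymmetric]
    simp only [map_sub, map_smul, inner_sub_left, inner_sub_right, inner_smul_left,
      inner_smul_right, h2, inner_self_eq_norm_sq_to_K]
    simp only [RCLike.re_to_complex] at h1
    simp [← Complex.ofReal_pow, h1]
    ring
  have b1 : 0 ≤ ‖S w - ((2 * t : ℝ) : ℂ) • L y‖ ^ 2 := by positivity
  have b2 : ‖S w - ((2 * t : ℝ) : ℂ) • L y‖ ^ 2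
      = RCLike.re (inner ℂ (S (S w)) w) - 2 * (2 * t) * RCLike.re (inner ℂ (S (L y)) w)
        + (2 * t) ^ 2 * ‖L y‖ ^ 2 := by
    have h1 : RCLike.re (inner ℂ (S w) (L y)) = RCLike.re (inner ℂ (S (L y)) w) := by
      rw [hS (L y) w, inner_re_symm]
    have h2 : RCLike.re (inner ℂ (S (S w)) w) = ‖S w‖ ^ 2 := by
      rw [hS (S w) w, inner_self_eq_norm_sq]
    rw [@norm_sub_sq ℂ, h2, inner_smul_right, norm_smul]
    simp only [RCLike.re_to_complex] at h1
    simp [h1, mul_pow]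
    ring
  have c : RCLike.re (inner ℂ (A (S y)) w) + RCLike.re (inner ℂ (S (L y)) w) = ‖w‖ ^ 2 := by
    rw [← map_add, ← inner_add_left, ← hw, inner_self_eq_norm_sq]
  rw [inner_add_left, map_add]
  nlinarith [mul_le_mul_of_nonneg_left h4 ht]

/-- `x ↦ A S² x + S L S x` is injective on any subspace on which `‖A S² x‖ ≥ t² ‖x‖`, `t > 0`. -/
lemma eq_zero_of_image_eq_zero (A S L : E →ₗ[ℂ] E) (hS : S.IsSymmetric)
    (hL : L.IsPositive) (hLL : ∀ x, L (L x) = S (A (S x))) (x : E) (t : ℝ) (ht : 0 < t)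
    (hx : t ^ 2 * ‖x‖ ≤ ‖A (S (S x))‖) (hw : A (S (S x)) + S (L (S x)) = 0) : x = 0 := by
  have h4 := four_mul_norm_sq_le A S L hS hL hLL x t hx
  rw [hw, norm_zero] at h4
  have hLy : L (S x) = 0 := by
    have : ‖L (S x)‖ ^ 2 ≤ 0 := by
      by_contra! h
      have := mul_pos (mul_pos (by norm_num : (0 : ℝ) < 4) ht) h
      linarith
    have := pow_eq_zero_iff (two_ne_zero) |>.1 (le_antisymm this (by positivity))
    simpa using this
  rw [hLy, map_zero, add_zero] at hw
  rw [hw, norm_zero] at hx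
  have : ‖x‖ ≤ 0 := by
    by_contra! h
    have := mul_pos (pow_pos ht 2) h
    linarith
  simpa using this

end Core

section Eigenvalues

variable {m : Type*} [Fintype m] [DecidableEq m]

lemma re_inner_eq_sum {H : Matrix m m ℂ} (hH : H.IsHermitian) (x : EuclideanSpace ℂ m) :
    RCLike.re (inner ℂ (Matrix.toEuclideanLin H x) x)
      = ∑ i, hH.eigenvalues i * ‖inner ℂ (hH.eigenvectorBasis i) x‖ ^ 2 := by
  have hsym := Matrix.isSymmetric_toEuclideanLin_iff.mpr hH
  have hb : ∀ i, Matrix.toEuclideanLin H (hH.eigenvectorBasis i)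
      = (hH.eigenvalues i : ℂ) • hH.eigenvectorBasis i := by
    intro i
    apply (WithLp.ofLp_injective 2)
    rw [Matrix.ofLp_toLpLin, Matrix.toLin'_apply, hH.mulVec_eigenvectorBasis]
    rfl
  rw [← hH.eigenvectorBasis.sum_inner_mul_inner, map_sum]
  refine Finset.sum_congr rfl fun i _ => ?_
  rw [hsym, hb, inner_smul_right, mul_assoc, RCLike.re_to_complex, Complex.re_ofReal_mul,
    ← RCLike.re_to_complex, inner_mul_symm_re_eq_norm, norm_mul, norm_inner_symm, sq]

lemma le_re_inner {H : Matrix m m ℂ} (hH : H.IsHermitian) (c : ℝ) (x : EuclideanSpace ℂ m)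
    (hx : ∀ i, hH.eigenvalues i < c → inner ℂ (hH.eigenvectorBasis i) x = 0) :
    c * ‖x‖ ^ 2 ≤ RCLike.re (inner ℂ (Matrix.toEuclideanLin H x) x) := by
  rw [re_inner_eq_sum hH, ← hH.eigenvectorBasis.sum_sq_norm_inner_right, Finset.mul_sum]
  refine Finset.sum_le_sum fun i _ => ?_
  by_cases h : hH.eigenvalues i < c
  · simp [hx i h]
  · exact mul_le_mul_of_nonneg_right (not_lt.1 h) (by positivity)

lemma re_inner_le {H : Matrix m m ℂ} (hH : H.IsHermitian) (c : ℝ) (x : EuclideanSpace ℂ m)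
    (hx : ∀ i, c < hH.eigenvalues i → inner ℂ (hH.eigenvectorBasis i) x = 0) :
    RCLike.re (inner ℂ (Matrix.toEuclideanLin H x) x) ≤ c * ‖x‖ ^ 2 := by
  rw [re_inner_eq_sum hH, ← hH.eigenvectorBasis.sum_sq_norm_inner_right, Finset.mul_sum]
  refine Finset.sum_le_sum fun i _ => ?_
  by_cases h : c < hH.eigenvalues i
  · simp [hx i h]
  · exact mul_le_mul_of_nonneg_right (not_lt.1 h) (by positivity)

/-- Fewer than `j` eigenvalues lie strictly above the `j`-th largest one, and at most
`card m - j` lie strictly below it. -/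
lemma card_eigenvalues {H : Matrix m m ℂ} (hH : H.IsHermitian) (j : ℕ) (h1 : 1 ≤ j)
    (hj : j ≤ Fintype.card m) :
    Fintype.card {i // hH.eigenvalues i < eigDesc H j} ≤ Fintype.card m - j ∧
      Fintype.card {i // eigDesc H j < hH.eigenvalues i} < j := by
  set l := (Finset.univ.val.map hH.eigenvalues).sort (· ≤ ·) with hl
  have hlen : l.length = Fintype.card m := by simp [hl]
  have hk : Fintype.card m - j < l.length := by omega
  have he : eigDesc H j = l[Fintype.card m - j] := by
    rw [eigDesc, dif_pos hH, ← hl, List.getD_eq_getElem]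
  have hmono : ∀ a b (hb : b < l.length) (hab : a ≤ b), l[a] ≤ l[b] := by
    intro a b hb hab
    exact (Multiset.pairwise_sort _ _).rel_get_of_le 
      (a := ⟨a, hab.trans_lt hb⟩) (b := ⟨b, hb⟩) hab
  have hcount : ∀ p : ℝ → Prop, Fintype.card {i // p (hH.eigenvalues i)} = l.countP (p ·) := by
    intro p
    rw [← Multiset.coe_countP, hl, Multiset.sort_eq, Multiset.countP_map, Fintype.card_subtype]
    rfl
  rw [hcount (· < eigDesc H j), hcount (eigDesc H j < ·)]
  constructor
  · rw [← List.take_append_drop (Fintype.card m - j) l, List.countP_append]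
    have h0 : (l.drop (Fintype.card m - j)).countP (fun a => a < eigDesc H j) = 0 := by
      rw [List.countP_eq_zero]
      intro a ha
      obtain ⟨i, hi, rfl⟩ := List.mem_iff_getElem.1 ha
      rw [List.getElem_drop, he]
      simpa using hmono _ _ _ (by omega)
    have h2 := List.countP_le_length (p := fun a => decide (a < eigDesc H j))
      (l := l.take (Fintype.card m - j))
    rw [List.length_take] at h2
    omega
  · rw [← List.take_append_drop (Fintype.card m - j + 1) l, List.countP_append]
    have h0 : (l.take (Fintype.card m - j + 1)).countP
        (fun a => eigDesc H j < a) = 0 := by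
      rw [List.countP_eq_zero]
      intro a ha
      obtain ⟨i, hi, rfl⟩ := List.mem_iff_getElem.1 ha
      rw [List.length_take] at hi
      rw [List.getElem_take, he]
      simpa using hmono _ _ _ (by omega)
    have h2 := List.countP_le_length (p := fun a => decide (eigDesc H j < a))
      (l := l.drop (Fintype.card m - j + 1))
    rw [List.length_drop] at h2
    omega

lemma eigDesc_nonneg {H : Matrix m m ℂ} (hH : H.PosSemidef) (j : ℕ) : 0 ≤ eigDesc H j := by
  rw [eigDesc, dif_pos hH.1]
  rw [List.getD_eq_getElem?_getD]
  rcases h : ((Finset.univ.val.map hH.1.eigenvalues).sort (· ≤ ·))[Fintype.card m - j]? with _ | a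
  · simp
  · have := List.mem_of_getElem? h
    simp only [Multiset.mem_sort, Multiset.mem_map] at this
    obtain ⟨i, -, rfl⟩ := this
    exact hH.eigenvalues_nonneg i

open scoped MatrixOrder Matrix.Norms.L2Operator in
lemma exists_posSemidef_sqrt {H : Matrix m m ℂ} (hH : H.PosSemidef) :
    ∃ S : Matrix m m ℂ, S.PosSemidef ∧ S * S = H :=
  ⟨CFC.sqrt H, (CFC.sqrt_nonneg H).posSemidef, CFC.sqrt_mul_sqrt_self H hH.nonneg⟩

end Eigenvalues

/-- For `n × n` positive semidefinite matrices `A, B`, the `j`-th largest eigenvalue of `A + B`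
satisfies `λ_j(A + B) ≥ 2 √(σ_j(AB))`. -/
theorem stmt0 {n : ℕ} (A B : Matrix (Fin n) (Fin n) ℂ)
    (hA : A.PosSemidef) (hB : B.PosSemidef) :
    ∀ j : ℕ, 1 ≤ j → j ≤ n →
      2 * Real.sqrt (singDesc (A * B) j) ≤ eigDesc (A + B) j := by
  intro j h1 hj
  have hAB : (A + B).PosSemidef := hA.add hB
  have hM : ((A * B)ᴴ * (A * B)).PosSemidef := Matrix.posSemidef_conjTranspose_mul_self _
  obtain ⟨t, ht⟩ : ∃ t, t = Real.sqrt (singDesc (A * B) j) := ⟨_, rfl⟩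
  have ht0 : 0 ≤ t := ht ▸ Real.sqrt_nonneg _
  have ht4 : (t ^ 2) ^ 2 = eigDesc ((A * B)ᴴ * (A * B)) j := by
    rw [ht, singDesc, Real.sq_sqrt (Real.sqrt_nonneg _), Real.sq_sqrt (eigDesc_nonneg hM j)]
  rw [← ht]
  rcases ht0.eq_or_lt with h0 | htpos
  · rw [← h0, mul_zero]
    exact eigDesc_nonneg hAB j
  obtain ⟨S, hS, hSB⟩ := exists_posSemidef_sqrt hB
  have hSAS : (S * A * S).PosSemidef := by
    have := hA.mul_mul_conjTranspose_same S
    rwa [hS.1.eq] at this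
  obtain ⟨L, hL, hLL⟩ := exists_posSemidef_sqrt hSAS
  have hmul : ∀ (P Q : Matrix (Fin n) (Fin n) ℂ) (x : EuclideanSpace ℂ (Fin n)),
      Matrix.toEuclideanLin (P * Q) x = Matrix.toEuclideanLin P (Matrix.toEuclideanLin Q x) := by
    intro P Q x
    simp [Matrix.toLpLin_apply, Matrix.mulVec_mulVec]
  have hAl := Matrix.isPositive_toEuclideanLin_iff.2 hA
  have hSl := (Matrix.isPositive_toEuclideanLin_iff.2 hS).isSymmetric
  have hLl := Matrix.isPositive_toEuclideanLin_iff.2 hL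
  have hLLl : ∀ x, Matrix.toEuclideanLin L (Matrix.toEuclideanLin L x)
      = Matrix.toEuclideanLin S (Matrix.toEuclideanLin A (Matrix.toEuclideanLin S x)) := by
    intro x
    rw [← hmul, hLL, hmul, hmul]
  have hBl : ∀ x, Matrix.toEuclideanLin B x
      = Matrix.toEuclideanLin S (Matrix.toEuclideanLin S x) := by
    intro x
    rw [← hmul, hSB]
  let W : EuclideanSpace ℂ (Fin n) →ₗ[ℂ] EuclideanSpace ℂ (Fin n) :=
    Matrix.toEuclideanLin A ∘ₗ Matrix.toEuclideanLin S ∘ₗ Matrix.toEuclideanLin S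
      + Matrix.toEuclideanLin S ∘ₗ Matrix.toEuclideanLin L ∘ₗ Matrix.toEuclideanLin S
  -- The kernel of `G` consists of the `x` in the top spectral subspace of `(AB)ᴴ(AB)` whose image
  -- `W x` is orthogonal to the eigenvectors of `A + B` with eigenvalue above `λ_j(A + B)`.
  let G : EuclideanSpace ℂ (Fin n) →ₗ[ℂ]
      ({i // hM.1.eigenvalues i < eigDesc ((A * B)ᴴ * (A * B)) j} → ℂ) ×
        ({i // eigDesc (A + B) j < hAB.1.eigenvalues i} → ℂ) :=
    LinearMap.prod
      (LinearMap.pi fun i => (innerSL ℂ (hM.1.eigenvectorBasis i.1)).toLinearMap)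
      ((LinearMap.pi fun i => (innerSL ℂ (hAB.1.eigenvectorBasis i.1)).toLinearMap) ∘ₗ W)
  have hG : LinearMap.ker G ≠ ⊥ := by
    apply LinearMap.ker_ne_bot_of_finrank_lt
    have c1 := (card_eigenvalues hM.1 j h1 (by simpa using hj)).1
    have c2 := (card_eigenvalues hAB.1 j h1 (by simpa using hj)).2
    rw [Module.finrank_prod, Module.finrank_fintype_fun_eq_card,
      Module.finrank_fintype_fun_eq_card, finrank_euclideanSpace]
    rw [Fintype.card_fin] at *
    omega
  obtain ⟨x, hxG, hx0⟩ := (Submodule.ne_bot_iff _).1 hG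
  rw [LinearMap.mem_ker, Prod.ext_iff] at hxG
  have hx1 : ∀ i, hM.1.eigenvalues i < eigDesc ((A * B)ᴴ * (A * B)) j →
      inner ℂ (hM.1.eigenvectorBasis i) x = 0 := fun i hi => congrFun hxG.1 ⟨i, hi⟩
  have hx2 : ∀ i, eigDesc (A + B) j < hAB.1.eigenvalues i →
      inner ℂ (hAB.1.eigenvectorBasis i) (W x) = 0 := fun i hi => congrFun hxG.2 ⟨i, hi⟩
  have hlow := le_re_inner hM.1 _ x hx1
  have hup := re_inner_le hAB.1 _ (W x) hx2
  have hx : t ^ 2 * ‖x‖ ≤ ‖Matrix.toEuclideanLin A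
      (Matrix.toEuclideanLin S (Matrix.toEuclideanLin S x))‖ := by
    rw [← hBl, ← hmul]
    rw [hmul, Matrix.toEuclideanLin_conjTranspose_eq_adjoint, LinearMap.adjoint_inner_left,
      inner_self_eq_norm_sq, ← ht4, ← mul_pow] at hlow
    exact (sq_le_sq₀ (by positivity) (by positivity)).1 hlow
  have hcore := two_mul_norm_sq_le _ _ _ hAl hSl hLl hLLl x t ht0 hx
  have hW0 : W x ≠ 0 := fun h =>
    hx0 (eq_zero_of_image_eq_zero _ _ _ hSl hLl hLLl x t htpos hx h)
  rw [map_add, LinearMap.add_apply, hBl] at hup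
  exact le_of_mul_le_mul_right (hcore.trans hup) (by positivity)
end

section
/- Let A and B be n×n complex positive semidefinite matrices and let t ∈ [0,1]. Then for every j = 1, …, n, λ_j((1−t)A + tB) ≥ λ_j(A^{(1−t)/2} B^{t} A^{(1−t)/2}); in other words, the j-th largest eigenvalue of the weighted arithmetic mean dominates the j-th largest eigenvalue of A^{1−t}B^{t}. -/
/-!
Put `H = A ^ ((1 - t) / 2)`, `N = H B ^ t H`, `M = (1 - t) A + t B`, and let `l = λ_j(N)`, where
`l > 0` may be assumed since `M` is positive semidefinite. A dimension count gives a nonzero `y` in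
the span of the top `j` eigenvectors of `N` such that `x = H y` lies in the span of the
eigenvectors of `M` for `λ_j(M), …, λ_n(M)` (`exists_common_vector`). On the one hand
`⟪x, B ^ t x⟫ = ⟪y, N y⟫ ≥ l ‖y‖²`; in particular `x ≠ 0`. On the other hand
`‖x‖² = ⟪y, H x⟫ ≤ ‖y‖ ‖H x‖` and `‖H x‖² = ⟪x, A ^ (1 - t) x⟫`. Together,
`l ‖x‖⁴ ≤ ⟪x, A ^ (1 - t) x⟫ ⟪x, B ^ t x⟫`.

After normalising `‖x‖ = 1`, Jensen's inequality for the concave powers (`quad_matPow_le`) and the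
scalar Young inequality bound the right-hand side by
`⟪x, A x⟫ ^ (1 - t) ⟪x, B x⟫ ^ t ≤ ⟪x, M x⟫` (`quad_mul_quad_le`), and `⟪x, M x⟫ ≤ λ_j(M)` by the
choice of `x`.
-/

open Matrix
open scoped Classical ComplexOrder

/-- The descending eigenvalues as a reindexing of Mathlib's (unordered) eigenvalue family. -/
lemma exists_equiv_eigDesc {n : ℕ} {M : Matrix (Fin n) (Fin n) ℂ} (hM : M.IsHermitian) :
    ∃ e : Fin n ≃ Fin n, Antitone (fun k => hM.eigenvalues (e k)) ∧
      ∀ k : Fin n, eigDesc M (k + 1) = hM.eigenvalues (e k) := by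
  let e : Fin n ≃ Fin n := (finCongr (Fintype.card_fin n).symm).trans
    (Fintype.equivOfCardEq (Fintype.card_fin _))
  have he : ∀ k, hM.eigenvalues (e k) = hM.eigenvalues₀ (finCongr (Fintype.card_fin n).symm k) := by
    intro k
    simp [e, IsHermitian.eigenvalues]
  have hanti : Antitone (fun k => hM.eigenvalues (e k)) := by
    intro a b hab
    simp only [he]
    exact hM.eigenvalues₀_antitone hab
  refine ⟨e, hanti, fun k => ?_⟩
  have hsort : (Finset.univ.val.map hM.eigenvalues).sort (· ≤ ·)
      = List.ofFn (fun k => hM.eigenvalues (e (Fin.rev k))) := by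
    refine List.Perm.eq_of_pairwise' (Multiset.pairwise_sort _ _) ?_ ?_
    · rw [List.pairwise_ofFn]
      intro i j hij
      exact hanti (Fin.rev_le_rev.mpr hij.le)
    · rw [← Multiset.coe_eq_coe, Multiset.sort_eq]
      have h1 := Multiset.map_univ_val_equiv (Fin.revPerm.trans e)
      rw [← h1, Multiset.map_map]
      simp [List.ofFn_eq_map, Fin.univ_def, Function.comp_def]
  have hk := k.isLt
  have hlt : n - (k + 1) < n := by omega
  rw [eigDesc, dif_pos hM, hsort, Fintype.card_fin, List.getD_eq_getElem _ _ (by simpa using hlt)]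
  simp only [List.getElem_ofFn]
  congr 2
  ext
  simp only [Fin.val_rev]
  omega

lemma dotProduct_conj_diagonal {n : ℕ} (U : Matrix (Fin n) (Fin n) ℂ) (f : Fin n → ℝ)
    (x : Fin n → ℂ) :
    star x ⬝ᵥ (U * diagonal (fun i => (f i : ℂ)) * Uᴴ) *ᵥ x
      = ((∑ i, f i * ‖(Uᴴ *ᵥ x) i‖ ^ 2 : ℝ) : ℂ) := by
  rw [← mulVec_mulVec, ← mulVec_mulVec, dotProduct_mulVec]
  have : star x ᵥ* U = star (Uᴴ *ᵥ x) := by rw [star_mulVec, conjTranspose_conjTranspose]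
  rw [this]
  simp only [dotProduct, mulVec_diagonal, Pi.star_apply, RCLike.star_def]
  push_cast
  refine Finset.sum_congr rfl fun i _ => ?_
  rw [← Complex.conj_mul']
  ring

lemma quad_eq_sum_eigenvalues {n : ℕ} {M : Matrix (Fin n) (Fin n) ℂ} (hM : M.IsHermitian)
    (x : Fin n → ℂ) :
    star x ⬝ᵥ M *ᵥ x = ((∑ i, hM.eigenvalues i *
      ‖((hM.eigenvectorUnitary : Matrix (Fin n) (Fin n) ℂ)ᴴ *ᵥ x) i‖ ^ 2 : ℝ) : ℂ) := by
  rw [← dotProduct_conj_diagonal]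
  congr 2
  exact hM.spectral_theorem

lemma normSq_eq_sum_coords {n : ℕ} {M : Matrix (Fin n) (Fin n) ℂ} (hM : M.IsHermitian)
    (x : Fin n → ℂ) :
    star x ⬝ᵥ x = ((∑ i,
      ‖((hM.eigenvectorUnitary : Matrix (Fin n) (Fin n) ℂ)ᴴ *ᵥ x) i‖ ^ 2 : ℝ) : ℂ) := by
  have h := dotProduct_conj_diagonal (hM.eigenvectorUnitary : Matrix (Fin n) (Fin n) ℂ)
    (fun _ => 1) x
  have hU : (hM.eigenvectorUnitary : Matrix (Fin n) (Fin n) ℂ) *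
      (hM.eigenvectorUnitary : Matrix (Fin n) (Fin n) ℂ)ᴴ = 1 :=
    Unitary.coe_mul_star_self hM.eigenvectorUnitary
  simpa [hU] using h

lemma matPow_isHermitian {n : ℕ} (A : Matrix (Fin n) (Fin n) ℂ) (s : ℝ) :
    (matPow A s).IsHermitian := by
  unfold matPow
  split_ifs with h
  · apply isHermitian_mul_mul_conjTranspose
    rw [isHermitian_diagonal_iff]
    intro i
    simp [isSelfAdjoint_iff]
  · exact isHermitian_zero

lemma matPow_half_mul_self {n : ℕ} {A : Matrix (Fin n) (Fin n) ℂ} (hA : A.PosSemidef) {s : ℝ}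
    (hs : 0 ≤ s) : matPow A (s / 2) * matPow A (s / 2) = matPow A s := by
  have hU : (hA.1.eigenvectorUnitary : Matrix (Fin n) (Fin n) ℂ)ᴴ *
      (hA.1.eigenvectorUnitary : Matrix (Fin n) (Fin n) ℂ) = 1 :=
    Unitary.coe_star_mul_self hA.1.eigenvectorUnitary
  simp only [matPow, dif_pos hA]
  generalize (hA.1.eigenvectorUnitary : Matrix (Fin n) (Fin n) ℂ) = U at *
  rw [show ∀ D : Matrix (Fin n) (Fin n) ℂ, U * D * Uᴴ * (U * D * Uᴴ) = U * (D * (Uᴴ * U) * D) * Uᴴ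
    from fun D => by simp only [Matrix.mul_assoc], hU, Matrix.mul_one, diagonal_mul_diagonal]
  congr 3
  ext i
  rw [← Complex.ofReal_mul, ← Real.rpow_add_of_nonneg (hA.eigenvalues_nonneg i) (by positivity)
    (by positivity), add_halves]

/-- Jensen's inequality for the concave function `λ ↦ λ ^ s`, averaged against the spectral
distribution of the unit vector `x`. -/
lemma quad_matPow_le {n : ℕ} {A : Matrix (Fin n) (Fin n) ℂ} (hA : A.PosSemidef) {s : ℝ}
    (hs0 : 0 ≤ s) (hs1 : s ≤ 1) {x : Fin n → ℂ} (hx : star x ⬝ᵥ x = 1) :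
    (star x ⬝ᵥ matPow A s *ᵥ x).re ≤ (star x ⬝ᵥ A *ᵥ x).re ^ s := by
  rw [matPow, dif_pos hA, dotProduct_conj_diagonal, quad_eq_sum_eigenvalues hA.1]
  rw [normSq_eq_sum_coords hA.1] at hx
  generalize (hA.1.eigenvectorUnitary : Matrix (Fin n) (Fin n) ℂ)ᴴ *ᵥ x = c at *
  simp only [Complex.ofReal_re]
  have h := (Real.concaveOn_rpow hs0 hs1).le_map_sum (t := Finset.univ)
    (w := fun i => ‖c i‖ ^ 2) (p := hA.1.eigenvalues) (fun i _ => by positivity)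
    (by exact_mod_cast hx) (fun i _ => hA.eigenvalues_nonneg i)
  simpa [mul_comm] using h

lemma normSq_dotProduct_le {n : ℕ} (y w : Fin n → ℂ) :
    ‖star y ⬝ᵥ w‖ ^ 2 ≤ (star y ⬝ᵥ y).re * (star w ⬝ᵥ w).re := by
  have hn : ∀ v : Fin n → ℂ, (star v ⬝ᵥ v).re = ‖WithLp.toLp 2 v‖ ^ 2 := by
    intro v
    rw [@norm_sq_eq_re_inner ℂ, EuclideanSpace.inner_toLp_toLp, dotProduct_comm]
    rfl
  have h := norm_inner_le_norm (𝕜 := ℂ) (WithLp.toLp 2 y) (WithLp.toLp 2 w)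
  rw [EuclideanSpace.inner_toLp_toLp, dotProduct_comm] at h
  rw [hn, hn, ← mul_pow]
  gcongr

/-- The quadratic form of `(1 - t) A + t B` dominates the product of the quadratic forms of
`A ^ (1 - t)` and `B ^ t` at a unit vector: Jensen followed by the scalar Young inequality. -/
lemma quad_mul_quad_le {n : ℕ} {A B : Matrix (Fin n) (Fin n) ℂ} (hA : A.PosSemidef)
    (hB : B.PosSemidef) {t : ℝ} (ht0 : 0 ≤ t) (ht1 : t ≤ 1) {x : Fin n → ℂ}
    (hx : star x ⬝ᵥ x = 1) (hp : 0 ≤ (star x ⬝ᵥ matPow B t *ᵥ x).re) :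
    (star x ⬝ᵥ matPow A (1 - t) *ᵥ x).re * (star x ⬝ᵥ matPow B t *ᵥ x).re ≤
      (star x ⬝ᵥ ((1 - t) • A + t • B) *ᵥ x).re := by
  have ha : 0 ≤ (star x ⬝ᵥ A *ᵥ x).re := (Complex.nonneg_iff.mp (hA.dotProduct_mulVec_nonneg x)).1
  have hb : 0 ≤ (star x ⬝ᵥ B *ᵥ x).re := (Complex.nonneg_iff.mp (hB.dotProduct_mulVec_nonneg x)).1
  calc _ ≤ (star x ⬝ᵥ A *ᵥ x).re ^ (1 - t) * (star x ⬝ᵥ B *ᵥ x).re ^ t :=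
        mul_le_mul (quad_matPow_le hA (by linarith) (by linarith) hx)
          (quad_matPow_le hB ht0 ht1 hx) hp (Real.rpow_nonneg ha _)
    _ ≤ (1 - t) * (star x ⬝ᵥ A *ᵥ x).re + t * (star x ⬝ᵥ B *ᵥ x).re :=
        Real.geom_mean_le_arith_mean2_weighted (by linarith) ht0 ha hb (by ring)
    _ = _ := by
        simp [add_mulVec, smul_mulVec, dotProduct_add, dotProduct_smul]

/-- Dimension count behind the Courant–Fischer comparison: the span of the top `k + 1` eigenvectors
of `N` contains a nonzero `y` such that `H y` lies in the span of the eigenvectors of `M`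
with (0-based) index at least `k`. -/
lemma exists_common_vector {n : ℕ} {M N : Matrix (Fin n) (Fin n) ℂ} (hM : M.IsHermitian)
    (hN : N.IsHermitian) (H : Matrix (Fin n) (Fin n) ℂ) (k : Fin n) :
    ∃ y : Fin n → ℂ, y ≠ 0 ∧
      eigDesc N (k + 1) * (star y ⬝ᵥ y).re ≤ (star y ⬝ᵥ N *ᵥ y).re ∧
      (star (H *ᵥ y) ⬝ᵥ M *ᵥ (H *ᵥ y)).re ≤
        eigDesc M (k + 1) * (star (H *ᵥ y) ⬝ᵥ (H *ᵥ y)).re := by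
  obtain ⟨e, he, hek⟩ := exists_equiv_eigDesc hM
  obtain ⟨e', he', hek'⟩ := exists_equiv_eigDesc hN
  let UM := (hM.eigenvectorUnitary : Matrix (Fin n) (Fin n) ℂ)ᴴ
  let UN := (hN.eigenvectorUnitary : Matrix (Fin n) (Fin n) ℂ)ᴴ
  -- The coordinates required to vanish number `(n - 1 - k) + k < n`.
  let f : (Fin n → ℂ) →ₗ[ℂ] ({i : Fin n // k < i} → ℂ) × ({i : Fin n // i < k} → ℂ) :=
    ((LinearMap.funLeft ℂ ℂ (fun i : {i : Fin n // k < i} => e' i)).comp UN.mulVecLin).prod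
      ((LinearMap.funLeft ℂ ℂ (fun i : {i : Fin n // i < k} => e i)).comp (UM * H).mulVecLin)
  have hf : LinearMap.ker f ≠ ⊥ := by
    apply LinearMap.ker_ne_bot_of_finrank_lt
    have hk := k.isLt
    simp only [Module.finrank_prod, Module.finrank_fintype_fun_eq_card, Fintype.card_fin,
      Fintype.card_subtype]
    have h1 : (Finset.univ.filter (fun i : Fin n => k < i)) = Finset.Ioi k := by ext; simp
    have h2 : (Finset.univ.filter (fun i : Fin n => i < k)) = Finset.Iio k := by ext; simp
    rw [h1, h2, Fin.card_Ioi, Fin.card_Iio]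
    omega
  obtain ⟨y, hy, hy0⟩ := (Submodule.ne_bot_iff _).mp hf
  rw [LinearMap.mem_ker, Prod.ext_iff] at hy
  have hy1 : ∀ i, k < i → (UN *ᵥ y) (e' i) = 0 := fun i hi => congrFun hy.1 ⟨i, hi⟩
  have hy2 : ∀ i, i < k → (UM *ᵥ (H *ᵥ y)) (e i) = 0 := fun i hi => by
    rw [mulVec_mulVec]
    exact congrFun hy.2 ⟨i, hi⟩
  refine ⟨y, hy0, ?_, ?_⟩
  · rw [normSq_eq_sum_coords hN, quad_eq_sum_eigenvalues hN, Complex.ofReal_re, Complex.ofReal_re,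
      Finset.mul_sum, ← Equiv.sum_comp e', ← Equiv.sum_comp e' (fun i => hN.eigenvalues i * _)]
    refine Finset.sum_le_sum fun i _ => ?_
    rcases lt_or_ge k i with hi | hi
    · have := hy1 i hi
      simp only [UN] at this
      simp [this]
    · rw [hek' k]
      exact mul_le_mul_of_nonneg_right (he' hi) (by positivity)
  · rw [normSq_eq_sum_coords hM, quad_eq_sum_eigenvalues hM, Complex.ofReal_re, Complex.ofReal_re,
      Finset.mul_sum, ← Equiv.sum_comp e, ← Equiv.sum_comp e (fun i => eigDesc M (k + 1) * _)]
    refine Finset.sum_le_sum fun i _ => ?_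
    rcases lt_or_ge i k with hi | hi
    · have := hy2 i hi
      simp only [UM] at this
      simp [this]
    · rw [hek k]
      exact mul_le_mul_of_nonneg_right (he hi) (by positivity)

lemma normSq_pos {n : ℕ} {x : Fin n → ℂ} (hx : x ≠ 0) : 0 < (star x ⬝ᵥ x).re :=
  (Complex.pos_iff.mp (dotProduct_star_self_pos_iff.mpr hx)).1

/-- For positive semidefinite `A, B` and `t ∈ [0,1]`,
`λ_j((1-t)A + tB) ≥ λ_j(A^{(1-t)/2} B^t A^{(1-t)/2})` for all `j`. -/
theorem stmt5 {n : ℕ} (A B : Matrix (Fin n) (Fin n) ℂ)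
    (hA : A.PosSemidef) (hB : B.PosSemidef) (t : ℝ) (ht0 : 0 ≤ t) (ht1 : t ≤ 1) :
    ∀ j : ℕ, 1 ≤ j → j ≤ n →
      eigDesc (matPow A ((1 - t) / 2) * matPow B t * matPow A ((1 - t) / 2)) j ≤
        eigDesc ((1 - t) • A + t • B) j := by
  intro j hj1 hjn
  obtain ⟨k, rfl⟩ : ∃ k : Fin n, j = k + 1 := ⟨⟨j - 1, by omega⟩, by simp; omega⟩
  have hM : ((1 - t) • A + t • B).PosSemidef :=
    (hA.smul (by linarith : (0 : ℝ) ≤ 1 - t)).add (hB.smul ht0)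
  set H := matPow A ((1 - t) / 2) with hH
  have hHh : Hᴴ = H := matPow_isHermitian A _
  have hN : (H * matPow B t * H).IsHermitian := by
    have := isHermitian_mul_mul_conjTranspose H (matPow_isHermitian B t)
    rwa [hHh] at this
  rcases le_or_gt (eigDesc (H * matPow B t * H) (k + 1)) 0 with hneg | hpos
  · obtain ⟨e, -, he⟩ := exists_equiv_eigDesc hM.1
    rw [he k]
    exact hneg.trans (hM.eigenvalues_nonneg _)
  obtain ⟨y, hy0, hyN, hyM⟩ := exists_common_vector hM.1 hN H k
  set l := eigDesc (H * matPow B t * H) (k + 1)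
  set μ := eigDesc ((1 - t) • A + t • B) (k + 1)
  set x := H *ᵥ y with hx
  have hswap : ∀ u v : Fin n → ℂ, star u ⬝ᵥ H *ᵥ v = star (H *ᵥ u) ⬝ᵥ v := by
    intro u v
    rw [star_mulVec, hHh, dotProduct_mulVec]
  have hNx : star y ⬝ᵥ (H * matPow B t * H) *ᵥ y = star x ⬝ᵥ matPow B t *ᵥ x := by
    rw [← mulVec_mulVec, ← mulVec_mulVec, hswap]
  rw [hNx] at hyN
  have hy := normSq_pos hy0
  have hx0 : x ≠ 0 := by
    intro h
    rw [h] at hyN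
    simp only [mulVec_zero, dotProduct_zero, Complex.zero_re] at hyN
    nlinarith [mul_pos hpos hy]
  have hxp := normSq_pos hx0
  set b := (star x ⬝ᵥ matPow B t *ᵥ x).re with hb
  set a := (star x ⬝ᵥ matPow A (1 - t) *ᵥ x).re with ha
  set r := (star x ⬝ᵥ x).re with hr
  have hxr : star x ⬝ᵥ x = (r : ℂ) := by
    apply Complex.ext
    · simp [hr]
    · simpa using (Complex.pos_iff.mp (dotProduct_star_self_pos_iff.mpr hx0)).2.symm
  have hHx : (star (H *ᵥ x) ⬝ᵥ (H *ᵥ x)).re = a := by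
    rw [← hswap, mulVec_mulVec, hH, matPow_half_mul_self hA (by linarith)]
  -- `‖x‖² = ⟪H y, x⟫ = ⟪y, H x⟫`, so Cauchy–Schwarz bounds `‖x‖⁴` by `‖y‖² ⟪x, A ^ (1 - t) x⟫`.
  have hcs : r ^ 2 ≤ (star y ⬝ᵥ y).re * a := by
    have h := normSq_dotProduct_le y (H *ᵥ x)
    rw [hswap, ← hx, hxr, hHx] at h
    simpa using h
  have ha0 : 0 ≤ a := by
    by_contra! h
    nlinarith [mul_pos hy (neg_pos.mpr h), sq_nonneg r]
  have hab : l * r ^ 2 ≤ a * b := by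
    nlinarith [mul_le_mul_of_nonneg_left hyN ha0, mul_le_mul_of_nonneg_left hcs hpos.le]
  have hb0 : 0 ≤ b := by nlinarith [mul_pos hpos hy]
  -- Rescale `x` to a unit vector.
  set c : ℂ := (((Real.sqrt r)⁻¹ : ℝ) : ℂ) with hc
  have hscale : ∀ Q : Matrix (Fin n) (Fin n) ℂ,
      star (c • x) ⬝ᵥ Q *ᵥ (c • x) = ((r⁻¹ : ℝ) : ℂ) * (star x ⬝ᵥ Q *ᵥ x) := by
    intro Q
    rw [star_smul, mulVec_smul, smul_dotProduct, dotProduct_smul, smul_smul, smul_eq_mul]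
    congr 1
    rw [hc, RCLike.star_def, Complex.conj_ofReal, ← Complex.ofReal_mul, ← mul_inv,
      Real.mul_self_sqrt hxp.le]
  have hunit : star (c • x) ⬝ᵥ (c • x) = 1 := by
    have h := hscale 1
    rw [one_mulVec, one_mulVec, hxr, ← Complex.ofReal_mul, inv_mul_cancel₀ hxp.ne'] at h
    simpa using h
  have key := quad_mul_quad_le hA hB ht0 ht1 hunit (by
    rw [hscale, Complex.re_ofReal_mul]
    exact mul_nonneg (inv_nonneg.mpr hxp.le) hb0)
  simp only [hscale, Complex.re_ofReal_mul, ← ha, ← hb] at key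
  have hr0 : r ≠ 0 := hxp.ne'
  clear_value r l μ a b
  calc l = r⁻¹ ^ 2 * (l * r ^ 2) := by field_simp
    _ ≤ r⁻¹ ^ 2 * (a * b) := mul_le_mul_of_nonneg_left hab (sq_nonneg _)
    _ = r⁻¹ * a * (r⁻¹ * b) := by ring
    _ ≤ _ := key
    _ ≤ r⁻¹ * (μ * r) := mul_le_mul_of_nonneg_left hyM (inv_nonneg.mpr hxp.le)
    _ = μ := by field_simp
end

section
/- Let A and B be n×n complex positive definite matrices and let G be the positive definite matrix satisfying G A⁻¹ G = B (i.e., G = A♯B). Then for every j = 1, …, n, λ_j(A + B) ≥ 2 λ_j(G). -/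
/-!
Expanding the square with respect to `A⁻¹` gives
`A + G A⁻¹ G - 2 G = (A - G) A⁻¹ (A - G) ≥ 0`, so `2 G ≤ A + B` in the Loewner order
(`posSemidef_add_sub_two_smul`). The eigenvalue inequality is then Weyl's monotonicity principle
(`two_mul_eigenvalues₀_le`): a dimension count yields a nonzero vector that lies both in the span
of the eigenvectors of `G` for its `j` largest eigenvalues and in the span of the eigenvectors of
`A + B` for its `n - j + 1` smallest ones, and the two quadratic forms are compared at that vector.
-/

open Matrix
open scoped Classical ComplexOrder

section Weyl

variable {m : Type*} [Fintype m] [DecidableEq m]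

/-- The quadratic form of a Hermitian matrix in coordinates with respect to its eigenbasis. -/
lemma re_quadForm_eq {H : Matrix m m ℂ} (hH : H.IsHermitian) (x : m → ℂ) :
    (star x ⬝ᵥ (H *ᵥ x)).re =
      ∑ i, hH.eigenvalues i *
        ‖((hH.eigenvectorUnitary : Matrix m m ℂ)ᴴ *ᵥ x) i‖ ^ 2 := by
  set U : Matrix m m ℂ := hH.eigenvectorUnitary.1 with hU
  have hs : H = U * diagonal (fun i => (hH.eigenvalues i : ℂ)) * Uᴴ := by
    have := hH.spectral_theorem
    rw [Unitary.conjStarAlgAut_apply] at this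
    exact this
  have h1 : star x ⬝ᵥ (H *ᵥ x) =
      star (Uᴴ *ᵥ x) ⬝ᵥ (diagonal (fun i => (hH.eigenvalues i : ℂ)) *ᵥ (Uᴴ *ᵥ x)) := by
    conv_lhs => rw [hs]
    rw [star_mulVec, conjTranspose_conjTranspose, ← dotProduct_mulVec, mulVec_mulVec,
      mulVec_mulVec, mul_assoc]
  rw [h1, dotProduct, Complex.re_sum]
  refine Finset.sum_congr rfl fun i _ => ?_
  rw [mulVec_diagonal, Pi.star_apply, mul_left_comm, Complex.star_def, Complex.conj_mul']
  norm_cast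

lemma sum_sq_coord_eq {H : Matrix m m ℂ} (hH : H.IsHermitian) (x : m → ℂ) :
    ∑ i, ‖((hH.eigenvectorUnitary : Matrix m m ℂ)ᴴ *ᵥ x) i‖ ^ 2 = ∑ i, ‖x i‖ ^ 2 := by
  set U : Matrix m m ℂ := hH.eigenvectorUnitary.1 with hU
  have hUU : U * Uᴴ = 1 := Unitary.mul_star_self_of_mem hH.eigenvectorUnitary.2
  have key : ∀ y : m → ℂ, (star y ⬝ᵥ y).re = ∑ i, ‖y i‖ ^ 2 := fun y => by
    rw [dotProduct, Complex.re_sum]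
    refine Finset.sum_congr rfl fun i _ => ?_
    rw [Pi.star_apply, Complex.star_def, Complex.conj_mul']
    norm_cast
  rw [← key, ← key, star_mulVec, conjTranspose_conjTranspose, ← dotProduct_mulVec, mulVec_mulVec,
    hUU, one_mulVec]

/-- Weyl's monotonicity principle: if `2 H ≤ K` in the Loewner order, then the eigenvalues in
decreasing order satisfy the same inequality. -/
lemma two_mul_eigenvalues₀_le {H K : Matrix m m ℂ} (hH : H.IsHermitian) (hK : K.IsHermitian)
    (h : (K - (2 : ℂ) • H).PosSemidef) (j : Fin (Fintype.card m)) :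
    2 * hH.eigenvalues₀ j ≤ hK.eigenvalues₀ j := by
  set U : Matrix m m ℂ := hH.eigenvectorUnitary.1 with hU
  set W : Matrix m m ℂ := hK.eigenvectorUnitary.1 with hW
  let e : Fin (Fintype.card m) ≃ m := Fintype.equivOfCardEq (Fintype.card_fin _)
  -- The kernel of `f` consists of the vectors with no component along the eigenvectors of `H` of
  -- index above `j`, nor along the eigenvectors of `K` of index below `j`: `card m - 1` conditions.
  let f : (m → ℂ) →ₗ[ℂ] ({k : Fin (Fintype.card m) // k ≠ j} → ℂ) :=
    LinearMap.pi fun k =>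
      if j < k.1 then LinearMap.proj (e k.1) ∘ₗ Uᴴ.mulVecLin
      else LinearMap.proj (e k.1) ∘ₗ Wᴴ.mulVecLin
  have hj : 0 < Fintype.card m := j.pos
  have hker : LinearMap.ker f ≠ ⊥ := by
    apply LinearMap.ker_ne_bot_of_finrank_lt
    simp only [Module.finrank_fintype_fun_eq_card, Fintype.card_subtype_compl,
      Fintype.card_fin, Fintype.card_subtype_eq]
    omega
  obtain ⟨x, hx, hx0⟩ := Submodule.exists_mem_ne_zero_of_ne_bot hker
  have hfx : ∀ k : {k : Fin (Fintype.card m) // k ≠ j}, f x k = 0 := fun k => by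
    rw [LinearMap.mem_ker.mp hx]; rfl
  have hUx : ∀ i, j < e.symm i → (Uᴴ *ᵥ x) i = 0 := fun i hi => by
    have := hfx ⟨e.symm i, hi.ne'⟩
    simpa [f, hi] using this
  have hWx : ∀ i, e.symm i < j → (Wᴴ *ᵥ x) i = 0 := fun i hi => by
    have := hfx ⟨e.symm i, hi.ne⟩
    simpa [f, hi.not_gt] using this
  have hpos : 0 < ∑ i, ‖x i‖ ^ 2 := by
    obtain ⟨i, hi⟩ := Function.ne_iff.mp hx0
    have hi' : 0 < ‖x i‖ := norm_pos_iff.mpr hi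
    exact Finset.sum_pos' (fun _ _ => by positivity) ⟨i, Finset.mem_univ _, by positivity⟩
  have hlow : hH.eigenvalues₀ j * ∑ i, ‖x i‖ ^ 2 ≤ (star x ⬝ᵥ (H *ᵥ x)).re := by
    rw [re_quadForm_eq hH, ← sum_sq_coord_eq hH, Finset.mul_sum]
    refine Finset.sum_le_sum fun i _ => ?_
    rcases lt_or_ge j (e.symm i) with hi | hi
    · have := hUx i hi
      simp [← hU, this]
    · exact mul_le_mul_of_nonneg_right (hH.eigenvalues₀_antitone hi) (by positivity)
  have hupp : (star x ⬝ᵥ (K *ᵥ x)).re ≤ hK.eigenvalues₀ j * ∑ i, ‖x i‖ ^ 2 := by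
    rw [re_quadForm_eq hK, ← sum_sq_coord_eq hK, Finset.mul_sum]
    refine Finset.sum_le_sum fun i _ => ?_
    rcases lt_or_ge (e.symm i) j with hi | hi
    · have := hWx i hi
      simp [← hW, this]
    · exact mul_le_mul_of_nonneg_right (hK.eigenvalues₀_antitone hi) (by positivity)
  have hmid : 2 * (star x ⬝ᵥ (H *ᵥ x)).re ≤ (star x ⬝ᵥ (K *ᵥ x)).re := by
    have := (Complex.le_def.mp (h.dotProduct_mulVec_nonneg x)).1
    rw [sub_mulVec, smul_mulVec, dotProduct_sub, dotProduct_smul] at this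
    simp at this
    linarith
  refine le_of_mul_le_mul_right ?_ hpos
  linarith

/-- The 1-based `eigDesc` agrees with the 0-based decreasing enumeration `eigenvalues₀`. -/
lemma eigDesc_eq {H : Matrix m m ℂ} (hH : H.IsHermitian) (j : Fin (Fintype.card m)) :
    eigDesc H (j + 1) = hH.eigenvalues₀ j := by
  have hmap : Finset.univ.val.map hH.eigenvalues = (List.ofFn hH.eigenvalues₀ : Multiset ℝ) := by
    rw [← Fin.univ_val_map]
    let e : Fin (Fintype.card m) ≃ m := Fintype.equivOfCardEq (Fintype.card_fin _)
    have : hH.eigenvalues = hH.eigenvalues₀ ∘ e.symm := rfl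
    rw [this, ← Multiset.map_map]
    congr 1
    exact congrArg Finset.val (Finset.map_univ_equiv e.symm)
  have hsort : (Finset.univ.val.map hH.eigenvalues).sort (· ≤ ·) =
      (List.ofFn hH.eigenvalues₀).reverse := by
    refine List.Perm.eq_of_pairwise' (r := (· ≤ ·)) (Multiset.pairwise_sort _ _) ?_ ?_
    · rw [List.pairwise_reverse]
      exact hH.eigenvalues₀_antitone.sortedGE_ofFn.pairwise
    · rw [← Multiset.coe_eq_coe, Multiset.sort_eq, hmap, Multiset.coe_reverse]
  have hj := j.2
  rw [eigDesc, dif_pos hH, hsort, List.getD_eq_getElem _ _ (by simp; omega), List.getElem_reverse,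
    List.getElem_ofFn]
  congr 1
  ext
  simp
  omega

end Weyl

/-- The arithmetic–geometric mean inequality in the Loewner order. -/
lemma posSemidef_add_sub_two_smul {m : Type*} [Fintype m] [DecidableEq m] {A B G : Matrix m m ℂ}
    (hA : A.PosDef) (hG : G.IsHermitian) (hgm : G * A⁻¹ * G = B) :
    (A + B - (2 : ℂ) • G).PosSemidef := by
  have hdet : IsUnit A.det := (isUnit_iff_isUnit_det A).mp hA.isUnit
  have hsq : A + B - (2 : ℂ) • G = (A - G) * A⁻¹ * (A - G)ᴴ := by
    rw [(hA.1.sub hG).eq, ← hgm, sub_mul, mul_nonsing_inv A hdet, sub_mul, mul_sub, mul_sub,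
      one_mul, one_mul, mul_assoc G A⁻¹ A, nonsing_inv_mul A hdet, mul_one, two_smul]
    abel
  rw [hsq]
  exact hA.inv.posSemidef.mul_mul_conjTranspose_same _

/-- For positive definite `A, B` and `G` positive definite with `G A⁻¹ G = B` (so `G = A ♯ B`),
`λ_j(A + B) ≥ 2 λ_j(G)` for all `j`. -/
theorem stmt8 {n : ℕ} (A B G : Matrix (Fin n) (Fin n) ℂ)
    (hA : A.PosDef) (hB : B.PosDef) (hG : G.PosDef) (hgm : G * A⁻¹ * G = B) :
    ∀ j : ℕ, 1 ≤ j → j ≤ n → 2 * eigDesc G j ≤ eigDesc (A + B) j := by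
  intro j h1 hn
  obtain ⟨k, rfl⟩ : ∃ k, j = k + 1 := ⟨j - 1, by omega⟩
  have hk : k < Fintype.card (Fin n) := by rw [Fintype.card_fin]; omega
  have hle := two_mul_eigenvalues₀_le hG.1 (hA.1.add hB.1)
    (posSemidef_add_sub_two_smul hA hG.1 hgm) ⟨k, hk⟩
  rwa [← eigDesc_eq, ← eigDesc_eq] at hle
end

section
/- Let A and B be n×n complex positive semidefinite matrices. Then for every j = 1, …, n, λ_j(A + B) ≥ 2 λ_j(B^{1/4} A^{1/2} B^{1/4}); equivalently (since B^{1/4} A^{1/2} B^{1/4} is positive semidefinite with the same eigenvalues as A^{1/2}B^{1/2}), λ_j(A + B) ≥ 2 λ_j(A^{1/2} B^{1/2}). -/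
/-!
Write `P = A^{1/4}` and `Q = B^{1/4}`, so that `B^{1/4} A^{1/2} B^{1/4} = (PQ)ᴴ(PQ)` and
`A + B = P⁴ + Q⁴`, and let `μ` be the `j`-th eigenvalue of the former. By Courant–Fischer
(`exists_test_space`) there is a `j`-dimensional subspace `V` on which `‖PQv‖² ≥ μ ‖v‖²`, and by
its converse half (`le_eigDesc`) it suffices to find a `j`-dimensional subspace `W` on which
`⟨w, (A + B) w⟩ ≥ 2 μ ‖w‖²`.

For `μ > 0` the choice is `W = (P² + √μ) Q V`. With `s = √μ`, `a = PQv` and `w = Pa + s Qv`,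
* `‖w‖² ≥ 4 s Re⟨Pa, Qv⟩ = 4 s ‖a‖²`, which also shows that `V → W` is injective;
* `‖w‖² = Re⟨Pw, a⟩ + s Re⟨Qw, v⟩`, so Cauchy–Schwarz and `s ‖v‖ ≤ ‖a‖` give
  `⟨w, (P² + Q²) w⟩ ≥ 2 s ‖w‖²`, hence `‖(P² + Q²) w‖ ≥ 2 s ‖w‖`;
* `‖P² w‖² + ‖Q² w‖² ≥ ‖(P² + Q²) w‖² / 2 ≥ 2 μ ‖w‖²`.
These estimates are `core_estimate`.
-/

open Matrix
open scoped Classical ComplexOrder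

/-- An orthonormal eigenbasis listed in decreasing order of the eigenvalues, together with the
identification of `eigDesc`, which sorts increasingly and counts from the end, with that list.
The 1-based index of `eigDesc` becomes the shift `k + 1`. -/
lemma spectral_data {n : ℕ} {H : Matrix (Fin n) (Fin n) ℂ} (h : H.IsHermitian) :
    ∃ (b : OrthonormalBasis (Fin n) ℂ (EuclideanSpace ℂ (Fin n))) (ev : Fin n → ℝ),
      Antitone ev ∧ (∀ k, toEuclideanLin H (b k) = (ev k : ℂ) • b k) ∧
      ∀ k : Fin n, eigDesc H (k + 1) = ev k := by
  have hT := isSymmetric_toEuclideanLin_iff.mpr h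
  set c := finCongr (Fintype.card_fin n) with hc
  refine ⟨(hT.eigenvectorBasis finrank_euclideanSpace).reindex c,
    fun k => h.eigenvalues₀ (c.symm k), ?_, ?_, ?_⟩
  · intro i j hij
    exact h.eigenvalues₀_antitone (by simpa [hc] using hij)
  · intro k
    rw [OrthonormalBasis.reindex_apply]
    exact hT.apply_eigenvectorBasis _ _
  · intro k
    have hanti : Antitone fun k => h.eigenvalues₀ (c.symm k) := by
      intro i j hij
      exact h.eigenvalues₀_antitone (by simpa [hc] using hij)
    set ev := fun k => h.eigenvalues₀ (c.symm k) with hev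
    have hmap : Finset.univ.val.map h.eigenvalues = (List.ofFn ev : Multiset ℝ) := by
      have : h.eigenvalues = ev ∘ ((Fintype.equivOfCardEq (Fintype.card_fin _)).symm.trans c) := by
        ext i
        simp [hev, IsHermitian.eigenvalues]
      rw [this, ← Multiset.map_map, Multiset.map_univ_val_equiv]
      simp [Fin.univ_val_map]
    have hlist : (Finset.univ.val.map h.eigenvalues).sort (· ≤ ·) = (List.ofFn ev).reverse := by
      apply List.Perm.eq_reverse_of_sortedLE_of_sortedGE
      · rw [← Multiset.coe_eq_coe, Multiset.sort_eq, hmap]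
      · exact (Multiset.pairwise_sort _ _).sortedLE
      · exact hanti.sortedGE_ofFn
    have hk := k.2
    rw [eigDesc, dif_pos h, hlist, List.getD_eq_getElem _ _ (by simp; omega), List.getElem_reverse]
    simp only [List.getElem_ofFn]
    show ev _ = ev k
    congr 1
    ext
    simp
    omega

lemma re_inner_eigen {n : ℕ} {E : Type*} [NormedAddCommGroup E] [InnerProductSpace ℂ E]
    (b : OrthonormalBasis (Fin n) ℂ E) (ev : Fin n → ℝ) (T : E →ₗ[ℂ] E) (hT : T.IsSymmetric)
    (hb : ∀ k, T (b k) = (ev k : ℂ) • b k) (x : E) :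
    (inner ℂ x (T x)).re = ∑ k, ev k * ‖inner ℂ (b k) x‖ ^ 2 := by
  rw [← b.sum_inner_mul_inner, Complex.re_sum]
  refine Finset.sum_congr rfl fun k _ => ?_
  rw [← hT, hb, inner_smul_left, Complex.conj_ofReal, mul_left_comm, Complex.re_ofReal_mul,
    ← inner_conj_symm x, ← Complex.normSq_eq_conj_mul_self, Complex.ofReal_re,
    Complex.normSq_eq_norm_sq]

/-- The easy half of Courant–Fischer: `⟨x, Hx⟩ ≥ λ_j(H) ‖x‖²` on the span of the top `j`
eigenvectors. The `j`-dimensional subspace is given as the range of an injective map `f`. -/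
lemma exists_test_space {n : ℕ} {H : Matrix (Fin n) (Fin n) ℂ} (h : H.IsHermitian)
    {j : ℕ} (hj : 1 ≤ j) (hjn : j ≤ n) :
    ∃ f : EuclideanSpace ℂ (Fin j) →ₗ[ℂ] EuclideanSpace ℂ (Fin n), Function.Injective f ∧
      ∀ c, eigDesc H j * ‖f c‖ ^ 2 ≤ (inner ℂ (f c) (toEuclideanLin H (f c))).re := by
  obtain ⟨b, ev, hanti, hb, hev⟩ := spectral_data h
  have ho : Orthonormal ℂ (b ∘ Fin.castLE hjn) := b.orthonormal.comp _ (Fin.castLE_injective hjn)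
  refine ⟨Fintype.linearCombination ℂ (b ∘ Fin.castLE hjn) ∘ₗ (WithLp.linearEquiv 2 ℂ _).toLinearMap,
    ?_, fun c => ?_⟩
  · rw [LinearMap.coe_comp]
    exact (linearIndependent_iff_injective_fintypeLinearCombination.mp ho.linearIndependent).comp
      (WithLp.linearEquiv 2 ℂ _).injective
  · set x := (Fintype.linearCombination ℂ (b ∘ Fin.castLE hjn) ∘ₗ
      (WithLp.linearEquiv 2 ℂ (Fin j → ℂ)).toLinearMap) c with hx
    rw [re_inner_eigen b ev _ (isSymmetric_toEuclideanLin_iff.mpr h) hb,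
      ← b.sum_sq_norm_inner_right x, Finset.mul_sum]
    refine Finset.sum_le_sum fun k _ => ?_
    by_cases hk : (k : ℕ) < j
    · have h1 : eigDesc H j ≤ ev k := by
        have := hev ⟨j - 1, by omega⟩
        simp only [Nat.sub_add_cancel hj] at this
        rw [this]
        exact hanti (Fin.le_def.mpr (by simp; omega))
      gcongr
    · have : inner ℂ (b k) x = 0 := by
        simp only [hx, LinearMap.comp_apply, Fintype.linearCombination_apply, inner_sum,
          inner_smul_right]
        refine Finset.sum_eq_zero fun i _ => ?_
        have hne : k ≠ Fin.castLE hjn i := by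
          rintro rfl
          exact hk (by simp)
        simp [b.inner_eq_zero hne]
      simp [this]

/-- The other half of Courant–Fischer: if `⟨x, Hx⟩ ≥ t ‖x‖²` on a `j`-dimensional subspace, then
`t ≤ λ_j(H)`, because that subspace contains a nonzero vector orthogonal to the top `j - 1`
eigenvectors. -/
lemma le_eigDesc {n : ℕ} {H : Matrix (Fin n) (Fin n) ℂ} (h : H.IsHermitian)
    {j : ℕ} (hj : 1 ≤ j) (hjn : j ≤ n) (t : ℝ)
    (f : EuclideanSpace ℂ (Fin j) →ₗ[ℂ] EuclideanSpace ℂ (Fin n)) (hf : Function.Injective f)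
    (hft : ∀ c, t * ‖f c‖ ^ 2 ≤ (inner ℂ (f c) (toEuclideanLin H (f c))).re) :
    t ≤ eigDesc H j := by
  obtain ⟨b, ev, hanti, hb, hev⟩ := spectral_data h
  let g : EuclideanSpace ℂ (Fin j) →ₗ[ℂ] (Fin (j - 1) → ℂ) :=
    LinearMap.pi (fun i : Fin (j - 1) =>
      (innerSL ℂ (b (Fin.castLE (by omega) i))).toLinearMap) ∘ₗ f
  have hker : LinearMap.ker g ≠ ⊥ := LinearMap.ker_ne_bot_of_finrank_lt (by simp; omega)
  obtain ⟨c, hc, hc0⟩ := (Submodule.ne_bot_iff _).mp hker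
  have hx0 : f c ≠ 0 := fun h0 => hc0 (hf (by simpa using h0))
  have hev' : eigDesc H j = ev ⟨j - 1, by omega⟩ := by
    have := hev ⟨j - 1, by omega⟩
    simpa only [Nat.sub_add_cancel hj] using this
  have hupper : (inner ℂ (f c) (toEuclideanLin H (f c))).re ≤ eigDesc H j * ‖f c‖ ^ 2 := by
    rw [re_inner_eigen b ev _ (isSymmetric_toEuclideanLin_iff.mpr h) hb,
      ← b.sum_sq_norm_inner_right (f c), Finset.mul_sum]
    refine Finset.sum_le_sum fun k _ => ?_
    by_cases hk : (k : ℕ) < j - 1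
    · have : inner ℂ (b k) (f c) = 0 := congrFun (LinearMap.mem_ker.mp hc) ⟨k, hk⟩
      simp [this]
    · have h1 : ev k ≤ eigDesc H j := by
        rw [hev']
        exact hanti (Fin.le_def.mpr (by simp; omega))
      gcongr
  exact le_of_mul_le_mul_right ((hft c).trans hupper) (by positivity)

/-- The analytic heart of the argument. If `s ‖v‖ ≤ ‖PQv‖`, then `w = P²Qv + s Qv` is nonzero
whenever `v` is, and `⟨w, (P⁴ + Q⁴) w⟩ ≥ 2 s² ‖w‖²`. -/
lemma core_estimate {E : Type*} [NormedAddCommGroup E] [InnerProductSpace ℂ E]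
    (P Q : E →ₗ[ℂ] E) (hP : P.IsSymmetric) (hQ : Q.IsSymmetric) {s : ℝ} (hs : 0 < s) (v : E)
    (hv : s ^ 2 * ‖v‖ ^ 2 ≤ ‖P (Q v)‖ ^ 2) (w : E) (hw : w = P (P (Q v)) + (s : ℂ) • Q v) :
    4 * s ^ 3 * ‖v‖ ^ 2 ≤ ‖w‖ ^ 2 ∧
      2 * s ^ 2 * ‖w‖ ^ 2 ≤ ‖P (P w)‖ ^ 2 + ‖Q (Q w)‖ ^ 2 := by
  set a := P (Q v) with ha
  have hcross : (inner ℂ (P a) (Q v)).re = ‖a‖ ^ 2 := by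
    rw [hP, ← ha, ← inner_self_eq_norm_sq (𝕜 := ℂ)]; rfl
  -- Since `‖x + y‖² = ‖x - y‖² + 4 Re⟨x, y⟩`, the cross term alone bounds `‖w‖²` from below.
  have hw4 : 4 * s * ‖a‖ ^ 2 ≤ ‖w‖ ^ 2 := by
    have h1 := norm_add_sq (𝕜 := ℂ) (P a) ((s : ℂ) • Q v)
    have h2 := norm_sub_sq (𝕜 := ℂ) (P a) ((s : ℂ) • Q v)
    have h3 : RCLike.re (inner ℂ (P a) ((s : ℂ) • Q v)) = s * ‖a‖ ^ 2 := by
      rw [inner_smul_right, ← hcross]; exact Complex.re_ofReal_mul _ _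
    rw [h3] at h1 h2
    rw [hw]
    nlinarith [sq_nonneg ‖P a - (s : ℂ) • Q v‖]
  refine ⟨by nlinarith, ?_⟩
  -- Pairing `w` with itself and moving `P` and `Q` across.
  have hdual : ‖w‖ ^ 2 ≤ ‖P w‖ * ‖a‖ + ‖Q w‖ * (s * ‖v‖) := by
    have h1 : ‖w‖ ^ 2 = (inner ℂ (P w) a).re + s * (inner ℂ (Q w) v).re := by
      rw [hP, hQ, ← Complex.re_ofReal_mul, ← inner_smul_right, ← Complex.add_re, ← inner_add_right,
        ← hw, ← inner_self_eq_norm_sq (𝕜 := ℂ)]; rfl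
    have h2 : (inner ℂ (P w) a).re ≤ ‖P w‖ * ‖a‖ := re_inner_le_norm (𝕜 := ℂ) _ _
    have h3 : (inner ℂ (Q w) v).re ≤ ‖Q w‖ * ‖v‖ := re_inner_le_norm (𝕜 := ℂ) _ _
    nlinarith
  have hform : ‖P w‖ ^ 2 + ‖Q w‖ ^ 2 ≤ ‖w‖ * ‖P (P w) + Q (Q w)‖ := by
    have h1 : (inner ℂ w (P (P w) + Q (Q w))).re = ‖P w‖ ^ 2 + ‖Q w‖ ^ 2 := by
      rw [inner_add_right, ← hP, ← hQ, Complex.add_re, ← inner_self_eq_norm_sq (𝕜 := ℂ),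
        ← inner_self_eq_norm_sq (𝕜 := ℂ)]; rfl
    rw [← h1]
    exact re_inner_le_norm (𝕜 := ℂ) _ _
  rcases (norm_nonneg w).eq_or_lt with h0 | h0
  · rw [← h0]; simp; positivity
  -- `⟨w, (P² + Q²) w⟩ ≥ 2 s ‖w‖²`: Cauchy–Schwarz on `hdual`, where
  -- `‖a‖² + s² ‖v‖² ≤ 2 ‖a‖² ≤ ‖w‖² / (2 s)`.
  have hlower : 2 * s * ‖w‖ ^ 2 ≤ ‖P w‖ ^ 2 + ‖Q w‖ ^ 2 := by
    have hcs : (‖w‖ ^ 2) ^ 2 ≤ (‖P w‖ ^ 2 + ‖Q w‖ ^ 2) * (‖a‖ ^ 2 + s ^ 2 * ‖v‖ ^ 2) := by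
      calc (‖w‖ ^ 2) ^ 2 ≤ (‖P w‖ * ‖a‖ + ‖Q w‖ * (s * ‖v‖)) ^ 2 := by gcongr
        _ ≤ _ := by nlinarith [sq_nonneg (‖P w‖ * (s * ‖v‖) - ‖Q w‖ * ‖a‖)]
    have h2 : 2 * s * (‖a‖ ^ 2 + s ^ 2 * ‖v‖ ^ 2) ≤ ‖w‖ ^ 2 := by nlinarith
    have h3 : 0 ≤ ‖P w‖ ^ 2 + ‖Q w‖ ^ 2 := by positivity
    have h4 : 2 * s * ‖w‖ ^ 2 * ‖w‖ ^ 2 ≤ (‖P w‖ ^ 2 + ‖Q w‖ ^ 2) * ‖w‖ ^ 2 := by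
      nlinarith [mul_le_mul_of_nonneg_left h2 h3, mul_le_mul_of_nonneg_left hcs hs.le]
    exact le_of_mul_le_mul_right h4 (by positivity)
  have hnorm : 2 * s * ‖w‖ ≤ ‖P (P w)‖ + ‖Q (Q w)‖ := by
    refine le_trans ?_ (norm_add_le _ _)
    refine le_of_mul_le_mul_left ?_ h0
    nlinarith
  -- The passage from `P² + Q²` to `P⁴ + Q⁴` is `(x + y)² ≤ 2 (x² + y²)`.
  have hsq : (2 * s * ‖w‖) ^ 2 ≤ (‖P (P w)‖ + ‖Q (Q w)‖) ^ 2 := by gcongr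
  nlinarith [sq_nonneg (‖P (P w)‖ - ‖Q (Q w)‖)]

lemma matPow_mul_matPow {n : ℕ} {A : Matrix (Fin n) (Fin n) ℂ} (h : A.PosSemidef) {s t : ℝ}
    (hs : 0 ≤ s) (ht : 0 ≤ t) : matPow A s * matPow A t = matPow A (s + t) := by
  have hU : (h.1.eigenvectorUnitary : Matrix (Fin n) (Fin n) ℂ)ᴴ *
      (h.1.eigenvectorUnitary : Matrix (Fin n) (Fin n) ℂ) = 1 :=
    Unitary.coe_star_mul_self h.1.eigenvectorUnitary
  simp only [matPow, dif_pos h]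
  set U := (h.1.eigenvectorUnitary : Matrix (Fin n) (Fin n) ℂ)
  rw [show ∀ D D' : Matrix (Fin n) (Fin n) ℂ, U * D * Uᴴ * (U * D' * Uᴴ) = U * (D * D') * Uᴴ from
    fun D D' => by
      calc _ = U * D * (Uᴴ * U) * D' * Uᴴ := by simp only [mul_assoc]
        _ = _ := by rw [hU]; simp only [mul_assoc, mul_one]]
  rw [diagonal_mul_diagonal]
  congr 3
  ext i
  rw [← Complex.ofReal_mul, Real.rpow_add_of_nonneg (h.eigenvalues_nonneg i) hs ht]

lemma matPow_one {n : ℕ} {A : Matrix (Fin n) (Fin n) ℂ} (h : A.PosSemidef) :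
    matPow A 1 = A := by
  conv_rhs => rw [h.1.spectral_theorem]
  simp only [matPow, dif_pos h, Real.rpow_one, Unitary.conjStarAlgAut_apply]
  rfl

/-- For positive semidefinite `A, B`, `λ_j(A + B) ≥ 2 λ_j(B^{1/4} A^{1/2} B^{1/4})` for all `j`. -/
theorem stmt10 {n : ℕ} (A B : Matrix (Fin n) (Fin n) ℂ)
    (hA : A.PosSemidef) (hB : B.PosSemidef) :
    ∀ j : ℕ, 1 ≤ j → j ≤ n →
      2 * eigDesc (matPow B (1/4) * matPow A (1/2) * matPow B (1/4)) j ≤ eigDesc (A + B) j := by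
  intro j hj hjn
  set MP := matPow A (1/4) with hMP
  set MQ := matPow B (1/4) with hMQ
  have hMPh : MP.IsHermitian := matPow_isHermitian _ _
  have hMQh : MQ.IsHermitian := matPow_isHermitian _ _
  have hX : matPow A (1/2) = MP * MP := by
    rw [hMP, matPow_mul_matPow hA (by norm_num) (by norm_num)]; norm_num
  have hY : matPow B (1/2) = MQ * MQ := by
    rw [hMQ, matPow_mul_matPow hB (by norm_num) (by norm_num)]; norm_num
  have hA4 : A = MP * MP * (MP * MP) := by
    rw [← hX, matPow_mul_matPow hA (by norm_num) (by norm_num)]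
    norm_num [matPow_one hA]
  have hB4 : B = MQ * MQ * (MQ * MQ) := by
    rw [← hY, matPow_mul_matPow hB (by norm_num) (by norm_num)]
    norm_num [matPow_one hB]
  have hABh : (A + B).IsHermitian := hA.1.add hB.1
  have hZh : (MQ * matPow A (1/2) * MQ).IsHermitian := by
    have := isHermitian_mul_mul_conjTranspose MQ (matPow_isHermitian A (1/2))
    rwa [hMQh.eq] at this
  set P := toEuclideanLin MP with hPdef
  set Q := toEuclideanLin MQ with hQdef
  have hP : P.IsSymmetric := isSymmetric_toEuclideanLin_iff.mpr hMPh
  have hQ : Q.IsSymmetric := isSymmetric_toEuclideanLin_iff.mpr hMQh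
  have hmul : ∀ (M N : Matrix (Fin n) (Fin n) ℂ) x,
      toEuclideanLin (M * N) x = toEuclideanLin M (toEuclideanLin N x) := fun M N x => by
    simp [toLpLin_apply, mulVec_mulVec]
  have hZform : ∀ v, (inner ℂ v (toEuclideanLin (MQ * matPow A (1/2) * MQ) v)).re
      = ‖P (Q v)‖ ^ 2 := fun v => by
    rw [hX, hmul, hmul, hmul, ← hQdef, ← hPdef, ← hQ, ← hP, ← inner_self_eq_norm_sq (𝕜 := ℂ)]; rfl
  have hABform : ∀ w, (inner ℂ w (toEuclideanLin (A + B) w)).re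
      = ‖P (P w)‖ ^ 2 + ‖Q (Q w)‖ ^ 2 := fun w => by
    conv_lhs => rw [hA4, hB4]
    rw [map_add, LinearMap.add_apply, inner_add_right, hmul, hmul, hmul, hmul, hmul, hmul,
      ← hQdef, ← hPdef, ← hQ, ← hQ, ← hP, ← hP, Complex.add_re,
      ← inner_self_eq_norm_sq (𝕜 := ℂ), ← inner_self_eq_norm_sq (𝕜 := ℂ)]; rfl
  obtain ⟨f, hf, hfZ⟩ := exists_test_space hZh hj hjn
  set μ := eigDesc (MQ * matPow A (1/2) * MQ) j with hμ
  -- For `μ ≤ 0` any `j`-dimensional subspace will do, as `A + B` is positive semidefinite.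
  rcases le_or_gt μ 0 with h0 | h0
  · refine le_eigDesc hABh hj hjn _ f hf fun c => ?_
    rw [hABform]
    have : 2 * μ * ‖f c‖ ^ 2 ≤ 0 := mul_nonpos_of_nonpos_of_nonneg (by linarith) (by positivity)
    exact this.trans (by positivity)
  · have hs : 0 < √μ := Real.sqrt_pos.mpr h0
    have hs2 : √μ ^ 2 = μ := Real.sq_sqrt h0.le
    let L : EuclideanSpace ℂ (Fin n) →ₗ[ℂ] EuclideanSpace ℂ (Fin n) :=
      P ∘ₗ P ∘ₗ Q + ((√μ : ℝ) : ℂ) • Q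
    have hcore := fun c => core_estimate P Q hP hQ hs (f c)
      (by rw [hs2, ← hZform]; exact hfZ c) (L (f c)) rfl
    refine le_eigDesc hABh hj hjn _ (L ∘ₗ f) ?_ fun c => ?_
    · rw [← LinearMap.ker_eq_bot, LinearMap.ker_eq_bot']
      intro c hc
      have h1 := (hcore c).1
      rw [← LinearMap.comp_apply, hc] at h1
      have h2 : ‖f c‖ ^ 2 ≤ 0 := by
        have h3 : 0 < 4 * √μ ^ 3 := by positivity
        by_contra! h4
        have := mul_pos h3 h4
        simp at h1
        linarith
      have h5 : f c = 0 := by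
        rw [← norm_eq_zero]
        exact pow_eq_zero_iff two_ne_zero |>.mp (le_antisymm h2 (by positivity))
      exact hf (by rw [h5, map_zero])
    · rw [hABform, LinearMap.comp_apply]
      have := (hcore c).2
      rwa [hs2] at this
end
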